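/- For any sequence of perfect matchings M_m in K_{2m,2m,2m}, the ratio pm(K_{2m,2m,2m} - M_m) / pm(K_{2m,2m,2m}) converges to e^{-3/4} as m → ∞. -/

import Mathlib

open SimpleGraph Filter Topology

/-- The number of perfect matchings of a graph `G`. -/
noncomputable def pmCount {V : Type} (G : SimpleGraph V) : ℕ :=
  {M : G.Subgraph | M.IsPerfectMatching}.ncard

open Finset in
/-- Perfect matchings of `G` correspond to the involutions moving every vertex to a neighbour. -/
lemma pmCount_eq_card_involutions {V : Type} [Fintype V] [DecidableEq V] (G : SimpleGraph V)
    [DecidableRel G.Adj] :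
    pmCount G = #{f : V → V | ∀ v, f (f v) = v ∧ G.Adj v (f v)} := by
  rw [← Set.ncard_coe_finset]
  symm
  refine Set.ncard_congr
    (fun f hf => { verts := Set.univ
                   Adj := fun v w => f v = w
                   adj_sub := ?_
                   edge_vert := fun _ => Set.mem_univ _
                   symm := ?_ }) ?_ ?_ ?_
  · rintro v w rfl
    simp only [coe_filter, mem_univ, true_and, Set.mem_ofPred_eq] at hf
    exact (hf v).2
  · simp only [coe_filter, mem_univ, true_and, Set.mem_ofPred_eq] at hf
    exact ⟨by rintro v w rfl; exact (hf v).1⟩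
  · intro f hf
    simp [Subgraph.isPerfectMatching_iff]
  · intro f f' hf hf' h
    have := congrArg Subgraph.Adj h
    funext v
    have h2 : f v = f v ↔ f' v = f v := Iff.of_eq (congrFun (congrFun this v) (f v))
    exact (h2.mp rfl).symm
  · intro M hM
    rw [Set.mem_ofPred_eq, Subgraph.isPerfectMatching_iff] at hM
    choose f hf huniq using hM
    refine ⟨f, ?_, ?_⟩
    · simp only [coe_filter, mem_univ, true_and, Set.mem_ofPred_eq]
      exact fun v => ⟨(huniq (f v) v (hf v).symm).symm, (hf v).adj_sub⟩
    · ext v w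
      · simpa using M.edge_vert (hf v)
      · exact ⟨by rintro rfl; exact hf v, fun h => (huniq v w h).symm⟩

section Extensions

open Finset

variable {V κ : Type*} [Fintype V] [DecidableEq V] [DecidableEq κ]

/-- The involutions changing the colour of every vertex and agreeing with `g` on `D`. -/
def colorMatchings (c : V → κ) (D : Finset V) (g : V → V) : Finset (V → V) :=
  {f | (∀ v, f (f v) = v ∧ c v ≠ c (f v)) ∧ ∀ u ∈ D, f u = g u}

lemma card_colorMatchings_eq_sum (c : V → κ) {D : Finset V} {g : V → V}
    (hg : ∀ u ∈ D, g u ∈ D ∧ g (g u) = u) {v : V} (hv : v ∉ D) :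
    #(colorMatchings c D g) = ∑ w with w ∉ D ∧ c w ≠ c v,
      #(colorMatchings c (insert v (insert w D))
        (Function.update (Function.update g v w) w v)) := by
  rw [card_eq_sum_card_fiberwise (f := fun f => f v) (t := {w | w ∉ D ∧ c w ≠ c v})]
  · refine sum_congr rfl fun w hw => ?_
    congr 1
    ext f
    simp only [mem_filter, mem_univ, true_and] at hw
    simp only [colorMatchings, mem_filter, mem_univ, true_and, mem_insert]
    have hwv : w ≠ v := fun h => hw.2 (by rw [h])
    constructor
    · rintro ⟨⟨hf, hD⟩, rfl⟩
      refine ⟨hf, ?_⟩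
      rintro u (rfl | rfl | hu)
      · simp [Function.update_of_ne hwv.symm]
      · simp [(hf v).1]
      · rw [Function.update_of_ne (by rintro rfl; exact hw.1 hu),
          Function.update_of_ne (by rintro rfl; exact hv hu), hD u hu]
    · rintro ⟨hf, hD⟩
      refine ⟨⟨hf, fun u hu => ?_⟩, ?_⟩
      · rw [hD u (.inr (.inr hu)), Function.update_of_ne (by rintro rfl; exact hw.1 hu),
          Function.update_of_ne (by rintro rfl; exact hv hu)]
      · rw [hD v (.inl rfl), Function.update_of_ne hwv.symm, Function.update_self]
  · intro f hf
    simp only [colorMatchings, coe_filter, mem_univ, true_and, Set.mem_ofPred_eq] at hf ⊢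
    refine ⟨fun h => hv ?_, (hf.1 v).2.symm⟩
    have := hf.2 _ h
    rw [(hf.1 v).1] at this
    rw [this]
    exact (hg _ h).1

omit [Fintype V] in
lemma closed_update {D : Finset V} {g : V → V}
    (hg : ∀ u ∈ D, g u ∈ D ∧ g (g u) = u) {v w : V} (hv : v ∉ D) (hw : w ∉ D) (hwv : w ≠ v) :
    ∀ u ∈ insert v (insert w D),
      Function.update (Function.update g v w) w v u ∈ insert v (insert w D) ∧
      Function.update (Function.update g v w) w v
        (Function.update (Function.update g v w) w v u) = u := by
  intro u hu
  simp only [mem_insert] at hu ⊢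
  rcases hu with rfl | rfl | hu
  · simp [Function.update_of_ne hwv.symm]
  · simp [Function.update_of_ne hwv.symm]
  · have h : ∀ x ∈ D, Function.update (Function.update g v w) w v x = g x := fun x hx => by
      rw [Function.update_of_ne (by rintro rfl; exact hw hx),
        Function.update_of_ne (by rintro rfl; exact hv hx)]
    rw [h u hu, h _ (hg u hu).1]
    exact ⟨.inr (.inr (hg u hu).1), (hg u hu).2⟩

lemma card_color_insert_insert (c : V → κ) {D : Finset V} {v w : V} (hv : v ∉ D) (hw : w ∉ D)
    (hwv : w ≠ v) (i : κ) :
    #{u | u ∉ insert v (insert w D) ∧ c u = i} + (if c v = i then 1 else 0)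
      + (if c w = i then 1 else 0) = #{u | u ∉ D ∧ c u = i} := by
  have h1 : ({u | u ∉ D ∧ c u = i} : Finset V) =
      ({u | u ∉ insert v (insert w D) ∧ c u = i} : Finset V) ∪ (({v} : Finset V).filter (c · = i))
        ∪ (({w} : Finset V).filter (c · = i)) := by
    ext u
    simp only [mem_filter, mem_univ, true_and, mem_insert, mem_union, mem_singleton]
    grind
  rw [h1, card_union_of_disjoint, card_union_of_disjoint, filter_singleton, filter_singleton]
  · split_ifs <;> simp
  · rw [Finset.disjoint_left]; intro u; simp; grind
  · rw [Finset.disjoint_left]; intro u; simp; grind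

open scoped Nat in
/-- With `x + y`, `x + z`, `y + z` free vertices of the three colours, a partial matching extends
to `(x + y)! (x + z)! (y + z)! / (x! y! z!)` perfect matchings. -/
lemma card_colorMatchings_mul (c : V → κ) (n : ℕ) :
    ∀ (x y z : ℕ) (i j k : κ) (D : Finset V) (g : V → V), x + y + z = n →
      i ≠ j → i ≠ k → j ≠ k → (∀ v, c v = i ∨ c v = j ∨ c v = k) →
      (∀ u ∈ D, g u ∈ D ∧ g (g u) = u) → (∀ u ∈ D, c u ≠ c (g u)) →
      #{u | u ∉ D ∧ c u = i} = x + y → #{u | u ∉ D ∧ c u = j} = x + z →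
      #{u | u ∉ D ∧ c u = k} = y + z →
      #(colorMatchings c D g) * (x ! * y ! * z !) = (x + y)! * (x + z)! * (y + z)! := by
  induction n with
  | zero =>
    intro x y z i j k D g hn hij hik hjk hc hg hgc hi hj hk
    obtain ⟨rfl, rfl, rfl⟩ : x = 0 ∧ y = 0 ∧ z = 0 := by omega
    have hD : ∀ u, u ∈ D := by
      intro u
      by_contra hu
      simp only [add_zero, card_eq_zero, filter_eq_empty_iff, mem_univ, true_implies] at hi hj hk
      rcases hc u with h | h | h
      exacts [hi ⟨hu, h⟩, hj ⟨hu, h⟩, hk ⟨hu, h⟩]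
    have : colorMatchings c D g = {g} := by
      ext f
      simp only [colorMatchings, mem_filter, mem_univ, true_and, mem_singleton]
      constructor
      · exact fun h => funext fun u => h.2 u (hD u)
      · rintro rfl
        exact ⟨fun v => ⟨(hg v (hD v)).2, hgc v (hD v)⟩, fun _ _ => rfl⟩
    simp [this]
  | succ n ih =>
    have main : ∀ (x y z : ℕ) (i j k : κ) (D : Finset V) (g : V → V), x ≤ y → x ≤ z →
        x + y + z = n + 1 →
        i ≠ j → i ≠ k → j ≠ k → (∀ v, c v = i ∨ c v = j ∨ c v = k) →
        (∀ u ∈ D, g u ∈ D ∧ g (g u) = u) → (∀ u ∈ D, c u ≠ c (g u)) →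
        #{u | u ∉ D ∧ c u = i} = x + y → #{u | u ∉ D ∧ c u = j} = x + z →
        #{u | u ∉ D ∧ c u = k} = y + z →
        #(colorMatchings c D g) * (x ! * y ! * z !) = (x + y)! * (x + z)! * (y + z)! := by
      intro x y z i j k D g hxy hxz hn hij hik hjk hc hg hgc hi hj hk
      obtain ⟨v, hv⟩ : ({u | u ∉ D ∧ c u = k} : Finset V).Nonempty := by
        rw [← card_pos]; omega
      simp only [mem_filter, mem_univ, true_and] at hv
      obtain ⟨hv, hvk⟩ := hv
      have hsplit : ({w | w ∉ D ∧ c w ≠ c v} : Finset V) =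
          ({w | w ∉ D ∧ c w = i} : Finset V) ∪ ({w | w ∉ D ∧ c w = j} : Finset V) := by
        ext w
        simp only [mem_filter, mem_univ, true_and, mem_union]
        have := hc w
        grind
      have hgc' : ∀ w, w ∉ D → c w ≠ c v → ∀ u ∈ insert v (insert w D),
          c u ≠ c (Function.update (Function.update g v w) w v u) := by
        intro w hw hwv u hu
        have hwv' : w ≠ v := fun h => hwv (by rw [h])
        simp only [mem_insert] at hu
        rcases hu with rfl | rfl | hu
        · simpa [Function.update_of_ne hwv'.symm] using hwv.symm
        · simpa using hwv
        · rw [Function.update_of_ne (by rintro rfl; exact hw hu),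
            Function.update_of_ne (by rintro rfl; exact hv hu)]
          exact hgc u hu
      rw [card_colorMatchings_eq_sum c hg hv, hsplit, sum_union, add_mul, sum_mul, sum_mul]
      · have hI : ∀ w ∈ ({w | w ∉ D ∧ c w = i} : Finset V),
            (x + y) * (#(colorMatchings c (insert v (insert w D))
              (Function.update (Function.update g v w) w v)) * (x ! * y ! * z !)) =
            y * ((x + y)! * (x + z)! * (y + z - 1)!) := by
          intro w hw
          simp only [mem_filter, mem_univ, true_and] at hw
          obtain ⟨hw, hwi⟩ := hw
          have hwv : c w ≠ c v := by rw [hwi, hvk]; exact hik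
          have hwv' : w ≠ v := fun h => hwv (by rw [h])
          have hi' := card_color_insert_insert c hv hw hwv' i
          have hj' := card_color_insert_insert c hv hw hwv' j
          have hk' := card_color_insert_insert c hv hw hwv' k
          rw [hi, hwi, hvk] at hi'
          rw [hj, hwi, hvk] at hj'
          rw [hk, hwi, hvk] at hk'
          simp only [hij, hik, hik.symm, hjk.symm, if_true, if_false] at hi' hj' hk'
          obtain ⟨y, rfl⟩ : ∃ y', y = y' + 1 := ⟨y - 1, by omega⟩
          have := ih x y z i j k _ _ (by omega) hij hik hjk hc (closed_update hg hv hw hwv')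
            (hgc' w hw hwv) (by omega) (by omega) (by omega)
          rw [show y + 1 + z - 1 = y + z by omega, show x + (y + 1) = (x + y) + 1 by ring,
            Nat.factorial_succ, Nat.factorial_succ]
          linear_combination ((x + y + 1) * (y + 1)) * this
        have hJ : ∀ w ∈ ({w | w ∉ D ∧ c w = j} : Finset V),
            (x + z) * (#(colorMatchings c (insert v (insert w D))
              (Function.update (Function.update g v w) w v)) * (x ! * y ! * z !)) =
            z * ((x + y)! * (x + z)! * (y + z - 1)!) := by
          intro w hw
          simp only [mem_filter, mem_univ, true_and] at hw
          obtain ⟨hw, hwj⟩ := hw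
          have hwv : c w ≠ c v := by rw [hwj, hvk]; exact hjk
          have hwv' : w ≠ v := fun h => hwv (by rw [h])
          have hi' := card_color_insert_insert c hv hw hwv' i
          have hj' := card_color_insert_insert c hv hw hwv' j
          have hk' := card_color_insert_insert c hv hw hwv' k
          rw [hi, hwj, hvk] at hi'
          rw [hj, hwj, hvk] at hj'
          rw [hk, hwj, hvk] at hk'
          simp only [hij.symm, hjk, hik.symm, hjk.symm, if_true, if_false] at hi' hj' hk'
          obtain ⟨z, rfl⟩ : ∃ z', z = z' + 1 := ⟨z - 1, by omega⟩
          have := ih x y z i j k _ _ (by omega) hij hik hjk hc (closed_update hg hv hw hwv')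
            (hgc' w hw hwv) (by omega) (by omega) (by omega)
          rw [show y + (z + 1) - 1 = y + z by omega, show x + (z + 1) = (x + z) + 1 by ring,
            Nat.factorial_succ, Nat.factorial_succ]
          linear_combination ((x + z + 1) * (z + 1)) * this
        have avg : ∀ (s : Finset V) (f : V → ℕ) (a b : ℕ), #s = a → (a = 0 → b = 0) →
            (∀ w ∈ s, a * f w = b) → ∑ w ∈ s, f w = b := by
          intro s f a b hs hab hf
          rcases Nat.eq_zero_or_pos a with h | h
          · rw [card_eq_zero.mp (hs.trans h), sum_empty, hab h]
          · apply Nat.eq_of_mul_eq_mul_left h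
            rw [mul_sum, sum_congr rfl hf, sum_const, hs, smul_eq_mul]
        rw [avg _ _ _ _ hi (fun h => by rw [show y = 0 by omega, zero_mul]) hI,
          avg _ _ _ _ hj (fun h => by rw [show z = 0 by omega, zero_mul]) hJ, ← add_mul,
          ← Nat.mul_factorial_pred (show y + z ≠ 0 by omega)]
        ring
      · rw [Finset.disjoint_left]
        intro u
        simp only [mem_filter, mem_univ, true_and]
        grind
    intro x y z i j k D g hn hij hik hjk hc hg hgc hi hj hk
    rcases le_total x y with hxy | hxy <;> rcases le_total x z with hxz | hxz
    · exact main x y z i j k D g hxy hxz hn hij hik hjk hc hg hgc hi hj hk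
    · have := main z x y j k i D g hxz (hxz.trans hxy) (by omega) hjk hij.symm hik.symm
        (fun v => by have := hc v; tauto) hg hgc (by omega) (by omega) (by omega)
      rw [show z + x = x + z by ring, show z + y = y + z by ring] at this
      linarith
    · have := main y x z i k j D g hxy (hxy.trans hxz) (by omega) hik hij hjk.symm
        (fun v => by have := hc v; tauto) hg hgc (by omega) (by omega) (by omega)
      rw [show y + x = x + y by ring] at this
      linarith
    · rcases le_total y z with hyz | hyz
      · have := main y x z i k j D g hxy hyz (by omega) hik hij hjk.symm
          (fun v => by have := hc v; tauto) hg hgc (by omega) (by omega) (by omega)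
        rw [show y + x = x + y by ring] at this
        linarith
      · have := main z x y j k i D g hxz hyz (by omega) hjk hij.symm hik.symm
          (fun v => by have := hc v; tauto) hg hgc (by omega) (by omega) (by omega)
        rw [show z + x = x + z by ring, show z + y = y + z by ring] at this
        linarith

end Extensions

section InclusionExclusion

open Finset
open scoped Nat

variable {V : Type*} [Fintype V] [DecidableEq V]

/-- The vertices of colour `i` whose partner under `g` has colour `j`. -/
def edgeClass (c : V → Fin 3) (g : V → V) (i j : Fin 3) : Finset V := {v | c v = i ∧ c (g v) = j}

omit [DecidableEq V] in
lemma mem_edgeClass {c : V → Fin 3} {g : V → V} {i j : Fin 3} {v : V} :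
    v ∈ edgeClass c g i j ↔ c v = i ∧ c (g v) = j := by
  simp [edgeClass]

omit [DecidableEq V] in
lemma card_edgeClass_comm (c : V → Fin 3) {g : V → V} (hg : g.Involutive) (i j : Fin 3) :
    #(edgeClass c g i j) = #(edgeClass c g j i) := by
  refine card_bij' (fun v _ => g v) (fun v _ => g v) ?_ ?_ (fun v _ => hg v) (fun v _ => hg v)
  all_goals
    intro v hv
    rw [mem_edgeClass] at hv ⊢
    rw [hg v]
    exact hv.symm

lemma card_edgeClass_add (c : V → Fin 3) {g : V → V} (hgc : ∀ v, c v ≠ c (g v)) {i j k : Fin 3}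
    (hij : i ≠ j) (hik : i ≠ k) (hjk : j ≠ k) :
    #(edgeClass c g i j) + #(edgeClass c g i k) = #{v | c v = i} := by
  rw [← card_union_of_disjoint]
  · congr 1
    ext v
    simp only [mem_union, mem_edgeClass, mem_filter, mem_univ, true_and]
    have := hgc v
    generalize c (g v) = d at *
    generalize c v = e at *
    omega
  · rw [Finset.disjoint_left]
    intro v h h'
    rw [mem_edgeClass] at h h'
    exact hjk (h.2.symm.trans h'.2)

lemma card_edgeClass {c : V → Fin 3} {g : V → V} {m : ℕ} (hg : g.Involutive)
    (hgc : ∀ v, c v ≠ c (g v)) (hm : ∀ i, #{v | c v = i} = 2 * m) :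
    #(edgeClass c g 0 1) = m ∧ #(edgeClass c g 0 2) = m ∧ #(edgeClass c g 1 2) = m := by
  have h0 := card_edgeClass_add c hgc (i := 0) (j := 1) (k := 2) (by decide) (by decide) (by decide)
  have h1 := card_edgeClass_add c hgc (i := 1) (j := 0) (k := 2) (by decide) (by decide) (by decide)
  have h2 := card_edgeClass_add c hgc (i := 2) (j := 0) (k := 1) (by decide) (by decide) (by decide)
  rw [hm] at h0 h1 h2
  rw [card_edgeClass_comm c hg] at h1
  rw [card_edgeClass_comm c hg 2 0, card_edgeClass_comm c hg 2 1] at h2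
  omega

/-- The number of perfect matchings of a complete tripartite graph having `x`, `y`, `z` edges
between the three pairs of classes. -/
noncomputable def tripartiteCount (x y z : ℕ) : ℝ :=
  (x + y)! * (x + z)! * (y + z)! / (x ! * y ! * z !)

lemma card_filter_agree {c : V → Fin 3} {g : V → V} {m : ℕ} (hg : g.Involutive)
    (hgc : ∀ v, c v ≠ c (g v)) (hm : ∀ i, #{v | c v = i} = 2 * m) {r s t : Finset V}
    (hr : r ⊆ edgeClass c g 0 1) (hs : s ⊆ edgeClass c g 0 2) (ht : t ⊆ edgeClass c g 1 2) :
    (#{f ∈ colorMatchings c ∅ g | (∀ u ∈ r, f u = g u) ∧ (∀ u ∈ s, f u = g u) ∧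
      ∀ u ∈ t, f u = g u} : ℝ) = tripartiteCount (m - #r) (m - #s) (m - #t) := by
  obtain ⟨h01, h02, h12⟩ := card_edgeClass hg hgc hm
  have hr' := card_le_card hr
  have hs' := card_le_card hs
  have ht' := card_le_card ht
  have hr2 : ∀ u ∈ r, c u = 0 ∧ c (g u) = 1 := fun u hu => mem_edgeClass.mp (hr hu)
  have hs2 : ∀ u ∈ s, c u = 0 ∧ c (g u) = 2 := fun u hu => mem_edgeClass.mp (hs hu)
  have ht2 : ∀ u ∈ t, c u = 1 ∧ c (g u) = 2 := fun u hu => mem_edgeClass.mp (ht hu)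
  set D : Finset V := (r ∪ s ∪ t) ∪ (r ∪ s ∪ t).image g with hD
  have hmem : ∀ u, u ∈ D ↔ (u ∈ r ∨ u ∈ s ∨ u ∈ t) ∨ (g u ∈ r ∨ g u ∈ s ∨ g u ∈ t) := by
    intro u
    simp only [hD, mem_union, mem_image, or_assoc]
    have : (∃ a, (a ∈ r ∨ a ∈ s ∨ a ∈ t) ∧ g a = u) ↔ (g u ∈ r ∨ g u ∈ s ∨ g u ∈ t) := by
      constructor
      · rintro ⟨a, ha, rfl⟩
        rwa [hg a]
      · exact fun h => ⟨g u, h, hg u⟩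
    rw [this]
  have hfilter : ({f ∈ colorMatchings c ∅ g | (∀ u ∈ r, f u = g u) ∧ (∀ u ∈ s, f u = g u) ∧
      ∀ u ∈ t, f u = g u} : Finset (V → V)) = colorMatchings c D g := by
    ext f
    simp only [colorMatchings, mem_filter, mem_univ, true_and, notMem_empty, false_implies,
      implies_true, and_true]
    refine and_congr_right fun hf => ?_
    constructor
    · rintro ⟨h1, h2, h3⟩ u hu
      have key : ∀ w, f w = g w → f (g w) = g (g w) := fun w hw => by
        rw [← hw, (hf w).1, hw, hg w]
      rcases (hmem u).mp hu with (h | h | h) | (h | h | h)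
      · exact h1 u h
      · exact h2 u h
      · exact h3 u h
      · simpa only [hg u] using key _ (h1 _ h)
      · simpa only [hg u] using key _ (h2 _ h)
      · simpa only [hg u] using key _ (h3 _ h)
    · intro h
      refine ⟨fun u hu => h u ?_, fun u hu => h u ?_, fun u hu => h u ?_⟩ <;> rw [hmem] <;> tauto
  have hcolor : ∀ i, #{u | u ∉ D ∧ c u = i} + #{u | u ∈ D ∧ c u = i} = 2 * m := by
    intro i
    rw [← hm i, ← card_union_of_disjoint]
    · congr 1
      ext u
      simp only [mem_union, mem_filter, mem_univ, true_and]
      tauto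
    · rw [Finset.disjoint_left]
      intro u
      simp only [mem_filter, mem_univ, true_and]
      tauto
  have himage : ∀ (a : Finset V) (u : V), u ∈ a.image g ↔ g u ∈ a := by
    intro a u
    rw [mem_image]
    exact ⟨by rintro ⟨w, hw, rfl⟩; rwa [hg w], fun h => ⟨g u, h, hg u⟩⟩
  have hc0 : #{u | u ∈ D ∧ c u = 0} = #r + #s := by
    rw [← card_union_of_disjoint]
    · congr 1
      ext u
      simp only [mem_union, mem_filter, mem_univ, true_and, hmem]
      have := hr2 u; have := hs2 u; have := ht2 u
      have := hr2 (g u); have := hs2 (g u); have := ht2 (g u)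
      rw [hg u] at *
      grind
    · rw [Finset.disjoint_left]
      intro u
      have := hr2 u; have := hs2 u
      grind
  have hc1 : #{u | u ∈ D ∧ c u = 1} = #r + #t := by
    rw [← card_image_of_injective r hg.injective, ← card_union_of_disjoint]
    · congr 1
      ext u
      simp only [mem_union, mem_filter, mem_univ, true_and, hmem, himage]
      have := hr2 u; have := hs2 u; have := ht2 u
      have := hr2 (g u); have := hs2 (g u); have := ht2 (g u)
      rw [hg u] at *
      grind
    · rw [Finset.disjoint_left]
      intro u
      rw [himage]
      have := hr2 (g u); have := ht2 u
      rw [hg u] at *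
      grind
  have hc2 : #{u | u ∈ D ∧ c u = 2} = #s + #t := by
    rw [← card_image_of_injective s hg.injective, ← card_image_of_injective t hg.injective,
      ← card_union_of_disjoint]
    · congr 1
      ext u
      simp only [mem_union, mem_filter, mem_univ, true_and, hmem, himage]
      have := hr2 u; have := hs2 u; have := ht2 u
      have := hr2 (g u); have := hs2 (g u); have := ht2 (g u)
      rw [hg u] at *
      grind
    · rw [Finset.disjoint_left]
      intro u
      rw [himage, himage]
      have := hs2 (g u); have := ht2 (g u)
      grind
  have h0 := hcolor 0
  have h1 := hcolor 1
  have h2 := hcolor 2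
  have := card_colorMatchings_mul c _ (m - #r) (m - #s) (m - #t) 0 1 2 D g rfl (by decide)
    (by decide) (by decide) (fun v => by generalize c v = d; omega)
    (fun u hu => ⟨by rw [hmem] at hu ⊢; rw [hg u]; tauto, hg u⟩) (fun u _ => hgc u)
    (by omega) (by omega) (by omega)
  rw [hfilter, tripartiteCount, eq_div_iff (by positivity)]
  exact_mod_cast this

lemma prod_one_sub_indicator {ι : Type*} (s : Finset ι) (p : ι → Prop) [DecidablePred p] :
    ∏ v ∈ s, (1 - if p v then (1 : ℝ) else 0) =
      ∑ t ∈ s.powerset, (-1) ^ #t * if ∀ v ∈ t, p v then (1 : ℝ) else 0 := by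
  classical
  simp_rw [sub_eq_add_neg]
  rw [prod_one_add]
  refine sum_congr rfl fun t _ => ?_
  rw [prod_neg, prod_ite_zero, prod_const_one]

lemma card_filter_avoid {c : V → Fin 3} {g : V → V} {m : ℕ} (hg : g.Involutive)
    (hgc : ∀ v, c v ≠ c (g v)) (hm : ∀ i, #{v | c v = i} = 2 * m) :
    (#{f ∈ colorMatchings c ∅ g | ∀ v, f v ≠ g v} : ℝ) =
      ∑ i ∈ range (m + 1), ∑ j ∈ range (m + 1), ∑ k ∈ range (m + 1),
        (-1) ^ (i + j + k) * (m.choose i * m.choose j * m.choose k) *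
          tripartiteCount (m - i) (m - j) (m - k) := by
  obtain ⟨h01, h02, h12⟩ := card_edgeClass hg hgc hm
  have hind : ∀ f ∈ colorMatchings c ∅ g, (if ∀ v, f v ≠ g v then (1 : ℝ) else 0) =
      ∑ r ∈ (edgeClass c g 0 1).powerset, ∑ s ∈ (edgeClass c g 0 2).powerset,
        ∑ t ∈ (edgeClass c g 1 2).powerset, (-1) ^ (#r + #s + #t) *
          if (∀ u ∈ r, f u = g u) ∧ (∀ u ∈ s, f u = g u) ∧ ∀ u ∈ t, f u = g u
            then (1 : ℝ) else 0 := by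
    intro f hf
    simp only [colorMatchings, mem_filter, mem_univ, true_and, notMem_empty, false_implies,
      implies_true, and_true] at hf
    have hprod : (if ∀ v, f v ≠ g v then (1 : ℝ) else 0) =
        (∏ v ∈ edgeClass c g 0 1, (1 - if f v = g v then (1 : ℝ) else 0)) *
        ((∏ v ∈ edgeClass c g 0 2, (1 - if f v = g v then (1 : ℝ) else 0)) *
        ∏ v ∈ edgeClass c g 1 2, (1 - if f v = g v then (1 : ℝ) else 0)) := by
      have hflip : ∀ v, (1 - if f v = g v then (1 : ℝ) else 0) = if f v ≠ g v then 1 else 0 := by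
        intro v
        split_ifs <;> simp_all
      simp only [hflip, prod_ite_zero, prod_const_one, ← ite_and, mul_ite, mul_one, mul_zero]
      refine if_congr ?_ rfl rfl
      constructor
      · exact fun h => ⟨⟨fun v _ => h v, fun v _ => h v⟩, fun v _ => h v⟩
      · rintro ⟨⟨h1, h2⟩, h3⟩ v hv
        have hv' : f (g v) = g (g v) := by rw [← hv, (hf v).1, hv, hg v]
        have e1 := h1 v
        have e2 := h2 v
        have e3 := h3 v
        have e4 := h1 (g v)
        have e5 := h2 (g v)
        have e6 := h3 (g v)
        have hne := hgc v
        simp only [mem_edgeClass, hg v, hv, hv', ne_eq, not_true_eq_false, imp_false]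
          at e1 e2 e3 e4 e5 e6
        generalize c (g v) = d at *
        generalize c v = e at *
        omega
    rw [hprod, prod_one_sub_indicator, prod_one_sub_indicator, prod_one_sub_indicator,
      sum_mul_sum, sum_mul_sum]
    simp_rw [mul_sum]
    refine sum_congr rfl fun r _ => sum_congr rfl fun s _ => sum_congr rfl fun t _ => ?_
    rw [ite_and, ite_and, pow_add, pow_add]
    split_ifs <;> ring
  rw [card_eq_sum_ones, sum_filter, Nat.cast_sum]
  push_cast
  rw [sum_congr rfl hind, sum_comm]
  have hr : ∀ r ∈ (edgeClass c g 0 1).powerset, ∑ f ∈ colorMatchings c ∅ g,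
      ∑ s ∈ (edgeClass c g 0 2).powerset,
        ∑ t ∈ (edgeClass c g 1 2).powerset, (-1) ^ (#r + #s + #t) *
          (if (∀ u ∈ r, f u = g u) ∧ (∀ u ∈ s, f u = g u) ∧ ∀ u ∈ t, f u = g u
            then (1 : ℝ) else 0) = ∑ s ∈ (edgeClass c g 0 2).powerset,
        ∑ t ∈ (edgeClass c g 1 2).powerset, (-1) ^ (#r + #s + #t) *
          tripartiteCount (m - #r) (m - #s) (m - #t) := by
    intro r hr
    rw [sum_comm]
    refine sum_congr rfl fun s hs => ?_
    rw [sum_comm]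
    refine sum_congr rfl fun t ht => ?_
    rw [← mul_sum, sum_boole, card_filter_agree hg hgc hm (mem_powerset.mp hr)
      (mem_powerset.mp hs) (mem_powerset.mp ht)]
  rw [sum_congr rfl hr]
  rw [sum_powerset_apply_card (f := fun i => ∑ s ∈ (edgeClass c g 0 2).powerset,
        ∑ t ∈ (edgeClass c g 1 2).powerset, (-1) ^ (i + #s + #t) *
          tripartiteCount (m - i) (m - #s) (m - #t)), h01]
  refine sum_congr rfl fun i _ => ?_
  rw [sum_powerset_apply_card (f := fun j =>
        ∑ t ∈ (edgeClass c g 1 2).powerset, (-1) ^ (i + j + #t) *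
          tripartiteCount (m - i) (m - j) (m - #t)), h02, smul_sum]
  refine sum_congr rfl fun j _ => ?_
  rw [sum_powerset_apply_card (f := fun k => (-1) ^ (i + j + k) *
          tripartiteCount (m - i) (m - j) (m - k)), h12, smul_sum, smul_sum]
  refine sum_congr rfl fun k _ => ?_
  simp only [nsmul_eq_mul]
  ring

end InclusionExclusion

section Asymptotics

open Finset
open scoped Nat

/-- The contribution of `a`, `b`, `c` removed edges between the three pairs of classes, relative to
the number of all perfect matchings. -/
noncomputable def relativeTerm (m : ℕ) (p : ℕ × ℕ × ℕ) : ℝ :=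
  (-1) ^ (p.1 + p.2.1 + p.2.2) / (p.1 ! * p.2.1 ! * p.2.2 !) *
    ((m.descFactorial p.1 * m.descFactorial p.2.1 * m.descFactorial p.2.2) ^ 2 /
      ((2 * m).descFactorial (p.1 + p.2.1) * (2 * m).descFactorial (p.1 + p.2.2) *
        (2 * m).descFactorial (p.2.1 + p.2.2)))

lemma relativeTerm_eq_div {m a b c : ℕ} (ha : a ≤ m) (hb : b ≤ m) (hc : c ≤ m) :
    (-1) ^ (a + b + c) * (m.choose a * m.choose b * m.choose c) *
      tripartiteCount (m - a) (m - b) (m - c) / tripartiteCount m m m =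
      relativeTerm m (a, b, c) := by
  have hd : ∀ {n k : ℕ}, k ≤ n → (n.descFactorial k : ℝ) = n ! / (n - k)! := by
    intro n k h
    rw [eq_div_iff (by positivity), mul_comm]
    exact_mod_cast Nat.factorial_mul_descFactorial h
  rw [relativeTerm, tripartiteCount, tripartiteCount, Nat.cast_choose ℝ ha, Nat.cast_choose ℝ hb,
    Nat.cast_choose ℝ hc]
  simp only
  rw [hd ha, hd hb, hd hc, hd (show a + b ≤ 2 * m by omega), hd (show a + c ≤ 2 * m by omega),
    hd (show b + c ≤ 2 * m by omega), show m - a + (m - b) = 2 * m - (a + b) by omega,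
    show m - a + (m - c) = 2 * m - (a + c) by omega,
    show m - b + (m - c) = 2 * m - (b + c) by omega, ← two_mul]
  field_simp

lemma descFactorial_mul_le {m : ℕ} (a b : ℕ) (ha : a ≤ m) :
    m.descFactorial a * m.descFactorial b ≤ (2 * m).descFactorial (a + b) := by
  rw [← Nat.descFactorial_mul_descFactorial (Nat.le_add_right a b), Nat.add_sub_cancel_left,
    mul_comm]
  gcongr
  all_goals omega

lemma norm_relativeTerm_le (m : ℕ) (p : ℕ × ℕ × ℕ) :
    ‖relativeTerm m p‖ ≤ 1 / p.1 ! * (1 / p.2.1 ! * (1 / p.2.2 !)) := by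
  obtain ⟨a, b, c⟩ := p
  rw [relativeTerm, norm_mul, norm_div, norm_pow, norm_neg, norm_one, one_pow]
  simp only
  rw [Real.norm_of_nonneg (by positivity), Real.norm_of_nonneg (by positivity)]
  have h : ((m.descFactorial a * m.descFactorial b * m.descFactorial c) ^ 2 /
      ((2 * m).descFactorial (a + b) * (2 * m).descFactorial (a + c) *
        (2 * m).descFactorial (b + c)) : ℝ) ≤ 1 := by
    apply div_le_one_of_le₀ _ (by positivity)
    by_cases h : a ≤ m ∧ b ≤ m ∧ c ≤ m
    · obtain ⟨ha, hb, hc⟩ := h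
      have h1 := descFactorial_mul_le a b ha
      have h2 := descFactorial_mul_le a c ha
      have h3 := descFactorial_mul_le b c hb
      have := Nat.mul_le_mul (Nat.mul_le_mul h1 h2) h3
      norm_cast
      calc _ = _ := by ring
        _ ≤ _ := this
    · have : m.descFactorial a * m.descFactorial b * m.descFactorial c = 0 := by
        simp only [mul_eq_zero, Nat.descFactorial_eq_zero_iff_lt]
        omega
      have h0 : (m.descFactorial a * m.descFactorial b * m.descFactorial c : ℝ) = 0 := by
        exact_mod_cast this
      rw [h0, zero_pow two_ne_zero]
      positivity
  calc _ ≤ 1 / (a ! * b ! * c ! : ℝ) * 1 := by gcongr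
    _ = _ := by field_simp

lemma tendsto_descFactorial_div_pow (k : ℕ) :
    Tendsto (fun n : ℕ => (n.descFactorial k : ℝ) / (n : ℝ) ^ k) atTop (𝓝 1) := by
  have h := isEquivalent_descFactorial k
  refine (Asymptotics.isEquivalent_iff_tendsto_one ?_).mp h
  filter_upwards [eventually_gt_atTop 0] with n hn
  positivity

lemma tendsto_relativeTerm (p : ℕ × ℕ × ℕ) :
    Tendsto (relativeTerm · p) atTop (𝓝 ((-1 / 4) ^ p.1 / p.1 ! *
      ((-1 / 4) ^ p.2.1 / p.2.1 ! * ((-1 / 4) ^ p.2.2 / p.2.2 !)))) := by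
  obtain ⟨a, b, c⟩ := p
  have h2 : Tendsto (fun m : ℕ => 2 * m) atTop atTop := tendsto_id.const_mul_atTop' two_pos
  have hn := tendsto_descFactorial_div_pow
  have hd := fun k => (hn k).comp h2
  have key := (((((hn a).mul (hn b)).mul (hn c)).pow 2).div
    (((hd (a + b)).mul (hd (a + c))).mul (hd (b + c))) (by norm_num)).const_mul
    ((-1 / 4) ^ a / a ! * ((-1 / 4) ^ b / b ! * ((-1 / 4) ^ c / c !)) : ℝ)
  have hlim : ((-1 / 4) ^ a / a ! * ((-1 / 4) ^ b / b ! * ((-1 / 4) ^ c / c !)) : ℝ) *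
      ((1 * 1 * 1) ^ 2 / (1 * 1 * 1)) =
      (-1 / 4) ^ a / a ! * ((-1 / 4) ^ b / b ! * ((-1 / 4) ^ c / c !)) := by ring
  rw [hlim] at key
  refine key.congr' ?_
  filter_upwards [eventually_gt_atTop 0] with m hm
  have h4 : (4 : ℝ) ^ a * 4 ^ b * 4 ^ c = 2 ^ (a + b) * 2 ^ (a + c) * 2 ^ (b + c) := by
    have h22 : (4 : ℝ) = 2 ^ 2 := by norm_num
    rw [h22, ← pow_mul, ← pow_mul, ← pow_mul]
    ring
  have hm' : (m : ℝ) ≠ 0 := by positivity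
  have hm2 : ((m : ℝ) ^ a * m ^ b * m ^ c) ^ 2 =
      m ^ (a + b) * m ^ (a + c) * m ^ (b + c) := by ring
  have hs : ((-1 / 4) ^ a / a ! * ((-1 / 4) ^ b / b ! * ((-1 / 4) ^ c / c !)) : ℝ) =
      (-1) ^ (a + b + c) / (a ! * b ! * c !) / (4 ^ a * 4 ^ b * 4 ^ c) := by
    rw [div_pow, div_pow, div_pow, pow_add, pow_add]
    field_simp
  have hx : ((m.descFactorial a / (m : ℝ) ^ a * (m.descFactorial b / (m : ℝ) ^ b) *
      (m.descFactorial c / (m : ℝ) ^ c)) ^ 2 : ℝ) =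
      (m.descFactorial a * m.descFactorial b * m.descFactorial c) ^ 2 /
        (m ^ (a + b) * m ^ (a + c) * m ^ (b + c)) := by
    rw [← hm2]
    field_simp
  have hy : ∀ k, ((2 * m).descFactorial k : ℝ) / ((2 * m : ℕ) : ℝ) ^ k =
      (2 * m).descFactorial k / (2 ^ k * m ^ k) := by
    intro k
    rw [Nat.cast_mul, mul_pow, Nat.cast_two]
  simp only [relativeTerm, Function.comp, Pi.div_apply]
  rw [hx, hs, hy, hy, hy, h4]
  generalize ((m.descFactorial a : ℝ) * m.descFactorial b * m.descFactorial c) ^ 2 = A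
  field_simp

lemma tendsto_sum_relativeTerm :
    Tendsto (fun m => ∑ a ∈ range (m + 1), ∑ b ∈ range (m + 1), ∑ c ∈ range (m + 1),
      relativeTerm m (a, b, c)) atTop (𝓝 (Real.exp (-3 / 4))) := by
  have hb : Summable fun n : ℕ => (1 / n ! : ℝ) := by
    simpa using Real.summable_pow_div_factorial 1
  have hsum : Summable fun p : ℕ × ℕ × ℕ =>
      (1 / p.1 ! * (1 / p.2.1 ! * (1 / p.2.2 !)) : ℝ) := by
    have h2 := hb.mul_of_nonneg hb (fun _ => by positivity) (fun _ => by positivity)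
    exact hb.mul_of_nonneg h2 (fun _ => by positivity) (fun _ => by positivity)
  have hlim := tendsto_tsum_of_dominated_convergence hsum tendsto_relativeTerm
    (Eventually.of_forall norm_relativeTerm_le)
  have hexp : ∑' n : ℕ, ((-1 / 4) ^ n / n ! : ℝ) = Real.exp (-1 / 4) := by
    rw [Real.exp_eq_exp_ℝ]
    exact (NormedSpace.expSeries_div_hasSum_exp (-1 / 4 : ℝ)).tsum_eq
  have hn : Summable fun n : ℕ => ‖((-1 / 4) ^ n / n ! : ℝ)‖ :=
    (Real.summable_pow_div_factorial _).norm
  have hval : ∑' p : ℕ × ℕ × ℕ, ((-1 / 4) ^ p.1 / p.1 ! *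
      ((-1 / 4) ^ p.2.1 / p.2.1 ! * ((-1 / 4) ^ p.2.2 / p.2.2 !)) : ℝ) = Real.exp (-3 / 4) := by
    have h2 := tsum_mul_tsum_of_summable_norm hn hn
    have h3 := tsum_mul_tsum_of_summable_norm hn (hn.mul_norm hn)
    rw [← h2, hexp] at h3
    rw [← h3, ← Real.exp_add, ← Real.exp_add]
    norm_num
  rw [hval] at hlim
  refine hlim.congr fun m => ?_
  rw [tsum_eq_sum (s := range (m + 1) ×ˢ range (m + 1) ×ˢ range (m + 1)), sum_product]
  · simp_rw [sum_product]
  · rintro ⟨a, b, c⟩ h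
    have h0 : m.descFactorial a * m.descFactorial b * m.descFactorial c = 0 := by
      simp only [mem_product, mem_range] at h
      simp only [mul_eq_zero, Nat.descFactorial_eq_zero_iff_lt]
      omega
    have h0' : (m.descFactorial a * m.descFactorial b * m.descFactorial c : ℝ) = 0 := by
      exact_mod_cast h0
    simp only [relativeTerm, h0']
    simp

end Asymptotics

/-- For any sequence of perfect matchings `M m` of `K_{2m,2m,2m}`, the proportion of
perfect matchings avoiding `M m` tends to `e^{-3/4}` as `m → ∞`. -/
theorem stmt_11
    (M : ∀ m : ℕ, (completeMultipartiteGraph (fun _ : Fin 3 => Fin (2 * m))).Subgraph)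
    (hM : ∀ m, (M m).IsPerfectMatching) :
    Tendsto
      (fun m : ℕ =>
        (pmCount (completeMultipartiteGraph (fun _ : Fin 3 => Fin (2 * m)) \
            (M m).spanningCoe) : ℝ) /
          (pmCount (completeMultipartiteGraph (fun _ : Fin 3 => Fin (2 * m))) : ℝ))
      atTop (𝓝 (Real.exp (-3 / 4))) := by
  classical
  refine tendsto_sum_relativeTerm.congr fun m => ?_
  have hpm := hM m
  rw [Subgraph.isPerfectMatching_iff] at hpm
  choose g hadj huniq using hpm
  have hg : g.Involutive := fun v => (huniq (g v) v (hadj v).symm).symm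
  set c : (Σ _ : Fin 3, Fin (2 * m)) → Fin 3 := Sigma.fst with hc
  have hK : ∀ v w, (completeMultipartiteGraph (fun _ : Fin 3 => Fin (2 * m))).Adj v w ↔
      c v ≠ c w := fun v w => Iff.rfl
  have hgc : ∀ v, c v ≠ c (g v) := fun v => (hK v (g v)).mp (hadj v).adj_sub
  have hm : ∀ i, (Finset.univ.filter fun v => c v = i).card = 2 * m := by
    intro i
    have : (Finset.univ.filter fun v => c v = i) =
        Finset.univ.map (Function.Embedding.sigmaMk (β := fun _ : Fin 3 => Fin (2 * m)) i) := by
      ext ⟨j, x⟩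
      simp only [hc, Finset.mem_filter, Finset.mem_univ, true_and, Finset.mem_map]
      constructor
      · rintro rfl; exact ⟨x, rfl⟩
      · rintro ⟨y, hy⟩; exact (congrArg Sigma.fst hy).symm
    rw [this, Finset.card_map, Finset.card_univ, Fintype.card_fin]
  have hden : (pmCount (completeMultipartiteGraph (fun _ : Fin 3 => Fin (2 * m))) : ℝ) =
      tripartiteCount m m m := by
    have := card_filter_agree hg hgc hm (Finset.empty_subset _) (Finset.empty_subset _)
      (Finset.empty_subset _)
    simp only [Finset.card_empty, Nat.sub_zero, Finset.notMem_empty, false_implies, implies_true,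
      and_true, Finset.filter_true] at this
    rw [← this, pmCount_eq_card_involutions]
    congr 2
    ext f
    simp [colorMatchings, hc]
  have hnum : (pmCount (completeMultipartiteGraph (fun _ : Fin 3 => Fin (2 * m)) \
      (M m).spanningCoe) : ℝ) =
      ((colorMatchings c ∅ g).filter fun f => ∀ v, f v ≠ g v).card := by
    rw [pmCount_eq_card_involutions]
    congr 2
    ext f
    have hMadj : ∀ v, (M m).Adj v (f v) ↔ f v = g v :=
      fun v => ⟨huniq v (f v), fun h => h ▸ hadj v⟩
    simp [colorMatchings, hMadj, forall_and, and_assoc, hc]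
  rw [hden, hnum, card_filter_avoid hg hgc hm, Finset.sum_div]
  refine Finset.sum_congr rfl fun i hi => ?_
  rw [Finset.sum_div]
  refine Finset.sum_congr rfl fun j hj => ?_
  rw [Finset.sum_div]
  refine Finset.sum_congr rfl fun k hk => ?_
  rw [Finset.mem_range] at hi hj hk
  exact (relativeTerm_eq_div (by omega) (by omega) (by omega)).symm
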